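/- arXiv:2101.12675 — 3 statements merged into one kernel-verified Lean document; each statement's English description precedes it below -/
import Mathlib

section
/- Let H be a real Hilbert space, A, B : H → Set H monotone operators, R ∈ ℕ with R ≥ 1, and jA, jB : H → H resolvents of A, B with parameter 1/R. Let (y_n) be generated by (MAR*) with data u, x₀ ∈ H, (α_n), (λ_n) ⊂ (0,1) and (β_n), (μ_n) ⊂ (0,∞). Let q ∈ H satisfy 0 ∈ A(q) and 0 ∈ B(q), and let N ∈ ℕ, N ≥ 1, satisfy N ≥ max{2‖u − q‖, ‖x₀ − q‖, ‖q‖}. Assume: η : ℕ × (ℕ→ℕ) → ℕ is a monotone functional such that for all k ∈ ℕ and all monotone f there is n ≤ η(k,f) with ‖jA(y_m) − y_m‖ ≤ 1/(k+1) and ‖jB(y_m) − y_m‖ ≤ 1/(k+1) for all m ∈ [n, f(n)]; A : ℕ → ℕ is a monotone rate of divergence for Σ α_n = ∞; β_n ≥ 1/R and μ_n ≥ 1/R for all n; and t : ℕ → ℕ is monotone with max{β_n, μ_n} ≤ t(n) for all n. Then for all k ∈ ℕ and all monotone f : ℕ → ℕ there exist n ≤ μ̃(k,f) and x ∈ H with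 ‖x − q‖ ≤ N such that for all m ∈ [n, f(n)]: ‖y_{2m} − x‖ ≤ 1/(k+1), ‖jA(x) − x‖ ≤ 1/(k+1) and ‖jB(x) − x‖ ≤ 1/(k+1). Here μ̃(k,f) := σ₁(k̃, Ω_η(k', n ↦ 2g(n)+2)), where k̃ := (k+1)²−1, k' := 16(k+1)²−1, σ₁(k,n) := A(n + ⌈ln(16N²(k+1))⌉) + 1, p(n) := f(σ₁(k̃, n)), g(n) := 64NR(k+1)²·(p(n)+1)·t(p(n)) − 1, Ω_η(k,h) := η(ζ(k, ĥ), h) with ĥ(m) := h(η(m,h)), and ζ(k,h) := 24N·(w_{h,N}^{(E)}(0)+1)² with w_{h,N}(m) := max{h(24N(m+1)²), 24N(m+1)²} and E := 4N⁴(k+1)². -/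
/-!
The proof is a quantitative version of the usual Halpern-type argument.

* `approx_projection` replaces the metric projection of `u` onto the common zeros of `A` and `B`.
  If no point `x` of the (tightening) sets of approximate common fixed points were
  `Δ`-minimal for `‖· - u‖²` relative to the next looser set, one could descend from `q` through
  `E` of these sets, decreasing `‖· - u‖²` (at most `N²/4` at `q`) by `Δ` each time, which is
  impossible since `E Δ = N²`. Convexity of the sets of approximate fixed points
  (`convex_approx_fixed`) turns approximate minimality into the variational inequality `⟪u - x, w - x⟫ ≤ 1/(k+1)`.
* `approx_projection_seq` combines this with the metastable asymptotic regularity `η`, so that the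
  variational inequality holds for `w = y j` on a long interval of indices `j`.
* `half_step` is the effect of one resolvent step on the squared distance to `x`. It uses
  monotonicity of the operator at `y'` and at `j x`; taking the inner product of `u - x` with the
  *new* point `y'` is what makes `α n → 0` and `lam n → 0` unnecessary.
* Iterating two half-steps (`decay`) contracts `‖y (2m) - x‖²` by `exp (-∑ α)` up to small errors,
  and the divergence of `∑ α` finishes the proof.
-/

open scoped RealInnerProductSpace

/-- A set-valued operator on a real Hilbert space is monotone. -/
def MonotoneOp {H : Type*} [NormedAddCommGroup H] [InnerProductSpace ℝ H]
    (A : H → Set H) : Prop :=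
  ∀ x x' y y' : H, y ∈ A x → y' ∈ A x' → 0 ≤ ⟪x - x', y - y'⟫

/-- `j` is the resolvent of `A` with parameter `1/R`. -/
def IsResolvent {H : Type*} [NormedAddCommGroup H] [InnerProductSpace ℝ H]
    (A : H → Set H) (R : ℕ) (j : H → H) : Prop :=
  ∀ x : H, (R : ℝ) • (x - j x) ∈ A (j x)

/-- `(y n)` is generated by the exact method of alternating resolvents (MAR*). -/
def MAR {H : Type*} [NormedAddCommGroup H] [InnerProductSpace ℝ H]
    (A B : H → Set H) (u x₀ : H) (α lam β μ : ℕ → ℝ) (y : ℕ → H) : Prop :=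
  y 0 = x₀ ∧ ∀ n : ℕ,
    (1 / β n) • (α n • u + (1 - α n) • y (2*n) - y (2*n+1)) ∈ A (y (2*n+1)) ∧
    (1 / μ n) • (lam n • u + (1 - lam n) • y (2*n+1) - y (2*n+2)) ∈ B (y (2*n+2))

/-- `g ≤* f`: strong majorizability. -/
def StrongMaj (g f : ℕ → ℕ) : Prop :=
  ∀ m n : ℕ, m ≤ n → g m ≤ f n ∧ f m ≤ f n

/-- A functional `φ : ℕ × (ℕ→ℕ) → ℕ` is monotone. -/
def MonoFunctional (φ : ℕ → (ℕ → ℕ) → ℕ) : Prop :=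
  ∀ (m n : ℕ) (f g : ℕ → ℕ), m ≤ n → StrongMaj g f → φ m g ≤ φ n f

/-- The bound `ζ(k,h) = 24N (w_{h,N}^{(E)}(0)+1)²`. -/
def zetaBound (N k : ℕ) (h : ℕ → ℕ) : ℕ :=
  24 * N *
    (((fun m => max (h (24*N*(m+1)^2)) (24*N*(m+1)^2))^[4*N^4*(k+1)^2] 0) + 1)^2

/-- The bound `Ω_η(k,h) = η(ζ(k,ĥ),h)` with `ĥ(m) = h(η(m,h))`. -/
def OmegaBound (N : ℕ) (η : ℕ → (ℕ → ℕ) → ℕ) (k : ℕ) (h : ℕ → ℕ) : ℕ :=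
  η (zetaBound N k (fun m => h (η m h))) h

/-- `σ₁(k,n) = A(n + ⌈ln(16N²(k+1))⌉) + 1`. -/
noncomputable def sigma1 (Ar : ℕ → ℕ) (N k n : ℕ) : ℕ :=
  Ar (n + ⌈Real.log (16*(N:ℝ)^2*((k:ℝ)+1))⌉₊) + 1

/-- The bound `μ̃(k,f)` of the conditional metastability theorem. -/
noncomputable def muTilde (Ar : ℕ → ℕ) (N R : ℕ) (t : ℕ → ℕ)
    (η : ℕ → (ℕ → ℕ) → ℕ) (k : ℕ) (f : ℕ → ℕ) : ℕ :=
  sigma1 Ar N ((k+1)^2 - 1)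
    (OmegaBound N η (16*(k+1)^2 - 1)
      (fun n => 2 * (64*N*R*(k+1)^2 * (f (sigma1 Ar N ((k+1)^2 - 1) n) + 1) *
        t (f (sigma1 Ar N ((k+1)^2 - 1) n)) - 1) + 2))


section Aux

variable {H : Type*} [NormedAddCommGroup H] [InnerProductSpace ℝ H]

/-! ### Resolvents and single resolvent steps -/

theorem resolvent_nonexpansive {A : H → Set H} (hA : MonotoneOp A) {R : ℕ} (hR : 1 ≤ R)
    {j : H → H} (hj : IsResolvent A R j) (x z : H) : ‖j x - j z‖ ≤ ‖x - z‖ := by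
  have h := hA _ _ _ _ (hj x) (hj z)
  rw [← smul_sub, inner_smul_right] at h
  have hR' : (0:ℝ) < R := by exact_mod_cast hR
  have h1 : 0 ≤ ⟪j x - j z, (x - j x) - (z - j z)⟫ := by
    by_contra hc
    push Not at hc
    nlinarith
  have h2 : (x - j x) - (z - j z) = (x - z) - (j x - j z) := by abel
  rw [h2, inner_sub_right, real_inner_self_eq_norm_sq] at h1
  have h3 := real_inner_le_norm (j x - j z) (x - z)
  by_contra hc
  push Not at hc
  nlinarith [norm_nonneg (x - z), norm_nonneg (j x - j z)]

theorem resolvent_zero {A : H → Set H} (hA : MonotoneOp A) {R : ℕ} (hR : 1 ≤ R)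
    {j : H → H} (hj : IsResolvent A R j) {q : H} (hq : (0:H) ∈ A q) : j q = q := by
  have h := hA _ _ _ _ (hj q) hq
  have hR' : (0:ℝ) < R := by exact_mod_cast hR
  have h2 : (R:ℝ) • (q - j q) - 0 = (-(R:ℝ)) • (j q - q) := by
    rw [sub_zero, neg_smul, ← smul_neg, neg_sub]
  rw [h2, inner_smul_right, real_inner_self_eq_norm_sq] at h
  have h3 : ‖j q - q‖ = 0 := by
    by_contra hne
    have : 0 < ‖j q - q‖ := lt_of_le_of_ne (norm_nonneg _) (Ne.symm hne)
    nlinarith [mul_pos hR' (pow_pos this 2)]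
  exact sub_eq_zero.mp (norm_eq_zero.mp h3)

/-- Monotonicity with the scaling factor `1 / b` cleared. -/
theorem mono_step {A : H → Set H} (hA : MonotoneOp A) {b : ℝ} (hb : 0 < b)
    {v y' p e : H} (hy' : (1 / b) • (v - y') ∈ A y') (he : e ∈ A p) :
    0 ≤ ⟪y' - p, v - y' - b • e⟫ := by
  have h := hA _ _ _ _ hy' he
  have h2 : v - y' - b • e = b • ((1 / b) • (v - y') - e) := by
    rw [smul_sub, smul_smul, mul_one_div_cancel hb.ne', one_smul]
  rw [h2, inner_smul_right]
  positivity

theorem convex_norm_le {a M : ℝ} (ha : a ∈ Set.Ioo (0:ℝ) 1) {u y q : H}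
    (hu : ‖u - q‖ ≤ M) (hy : ‖y - q‖ ≤ M) : ‖a • u + (1 - a) • y - q‖ ≤ M := by
  have e : a • u + (1 - a) • y - q = a • (u - q) + (1 - a) • (y - q) := by module
  rw [e]
  refine (norm_add_le _ _).trans ?_
  rw [norm_smul, norm_smul, Real.norm_of_nonneg ha.1.le,
    Real.norm_of_nonneg (by linarith [ha.2] : (0:ℝ) ≤ 1 - a)]
  nlinarith [ha.1, ha.2]

theorem step_bounded {A : H → Set H} (hA : MonotoneOp A) {q : H} (hq : (0:H) ∈ A q)
    {a b M : ℝ} (ha : a ∈ Set.Ioo (0:ℝ) 1) (hb : 0 < b) {u y y' : H}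
    (hy' : (1 / b) • (a • u + (1 - a) • y - y') ∈ A y')
    (hu : ‖u - q‖ ≤ M) (hy : ‖y - q‖ ≤ M) : ‖y' - q‖ ≤ M := by
  have h := mono_step hA hb hy' hq
  have hv := convex_norm_le ha hu hy
  set v := a • u + (1 - a) • y
  have e : v - y' - b • (0:H) = (v - q) - (y' - q) := by rw [smul_zero]; abel
  rw [e, inner_sub_right, real_inner_self_eq_norm_sq] at h
  have h3 := real_inner_le_norm (y' - q) (v - q)
  by_contra hc
  push Not at hc
  nlinarith [norm_nonneg (v - q), norm_nonneg (y' - q)]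

/-- One regularized resolvent step: the squared distance to an approximate zero `x` contracts by
`1 - a`, up to a variational term `ε` and an error controlled by the residual `δ` of `x`. -/
theorem half_step {A : H → Set H} (hA : MonotoneOp A) {R : ℕ} (hR : 1 ≤ R)
    {j : H → H} (hj : IsResolvent A R j) {a b M δ ε T : ℝ} (ha : a ∈ Set.Ioo (0:ℝ) 1)
    (hb : 1 / (R:ℝ) ≤ b) (hbT : b ≤ T) {u x y y' q : H}
    (hy' : (1 / b) • (a • u + (1 - a) • y - y') ∈ A y')
    (hu : ‖u - q‖ ≤ M) (hx : ‖x - q‖ ≤ M) (hyq : ‖y - q‖ ≤ M) (hyq' : ‖y' - q‖ ≤ M)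
    (hδ : ‖j x - x‖ ≤ δ) (hε : ⟪u - x, y' - x⟫ ≤ ε) :
    ‖y' - x‖ ^ 2 - 2 * ε ≤ (1 - a) * (‖y - x‖ ^ 2 - 2 * ε) + 8 * M * R * T * δ := by
  have hR' : (0:ℝ) < R := by exact_mod_cast hR
  have hb0 : 0 < b := lt_of_lt_of_le (by positivity) hb
  have hbR : 1 ≤ b * R := by rwa [div_le_iff₀ hR'] at hb
  have h := mono_step hA hb0 hy' (hj x)
  have hv := convex_norm_le ha hu hyq
  have hvd : a • u + (1 - a) • y - x = a • (u - x) + (1 - a) • (y - x) := by module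
  set v := a • u + (1 - a) • y
  have hM : 0 ≤ M := (norm_nonneg _).trans hu
  have hδ0 : 0 ≤ δ := (norm_nonneg _).trans hδ
  -- with `d = y' - x` and `e = x - j x`, expand the monotonicity inequality
  set e := x - j x with he
  set d := y' - x with hd
  have hen : ‖e‖ ≤ δ := by rw [he, norm_sub_rev]; exact hδ
  have e1 : y' - j x = d + e := by rw [hd, he]; abel
  have e2 : v - y' - b • ((R:ℝ) • e) = (v - x) - d - (b * R) • e := by
    rw [hd, smul_smul]; abel
  rw [e1, e2, inner_add_left, inner_sub_right, inner_sub_right, real_inner_self_eq_norm_sq,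
    inner_sub_right (𝕜 := ℝ) e, inner_smul_right, inner_smul_right,
    real_inner_self_eq_norm_sq] at h
  have h3 : ⟪d, v - x⟫ = a * ⟪u - x, d⟫ + (1 - a) * ⟪d, y - x⟫ := by
    rw [hvd, inner_add_right, inner_smul_right, inner_smul_right, real_inner_comm d (u - x)]
  have h4 : 2 * ⟪d, y - x⟫ ≤ ‖d‖ ^ 2 + ‖y - x‖ ^ 2 := by
    nlinarith [real_inner_le_norm d (y - x), sq_nonneg (‖d‖ - ‖y - x‖)]
  have hdn : ‖d‖ ≤ 2 * M := by
    have : d = (y' - q) - (x - q) := by rw [hd]; abel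
    rw [this]; linarith [norm_sub_le (y' - q) (x - q)]
  have h5 : ⟪e, v - x - d⟫ ≤ δ * (2 * M) := by
    have e5 : v - x - d = (v - q) - (y' - q) := by rw [hd]; abel
    have : ‖v - x - d‖ ≤ 2 * M := by rw [e5]; linarith [norm_sub_le (v - q) (y' - q)]
    exact (real_inner_le_norm _ _).trans (by gcongr)
  have h6 : -⟪d, e⟫ ≤ (2 * M) * δ := by
    rw [← inner_neg_left]
    refine (real_inner_le_norm _ _).trans ?_
    rw [norm_neg]; gcongr
  have h7 : b * R * (-⟪d, e⟫) ≤ b * R * ((2 * M) * δ) :=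
    mul_le_mul_of_nonneg_left h6 (by positivity)
  have h8 : 0 ≤ b * R * ‖e‖ ^ 2 := by positivity
  have h9 : (1:ℝ) * (δ * (2 * M)) ≤ b * R * (δ * (2 * M)) := by gcongr
  have h10 : b * R * (δ * (2 * M)) ≤ T * R * (δ * (2 * M)) := by gcongr
  have h11 : a * ⟪u - x, d⟫ ≤ a * ε := mul_le_mul_of_nonneg_left hε ha.1.le
  have h12 : (1 - a) * (2 * ⟪d, y - x⟫) ≤ (1 - a) * (‖d‖ ^ 2 + ‖y - x‖ ^ 2) :=
    mul_le_mul_of_nonneg_left h4 (by linarith [ha.2])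
  have h13 : 0 ≤ a * ‖d‖ ^ 2 := mul_nonneg ha.1.le (sq_nonneg _)
  nlinarith

/-! ### Approximate fixed points and the approximate projection -/

/-- For a nonexpansive `T`, points on the segment between two `δ`-approximate fixed points are
`√(Dδ + δ²)`-approximate fixed points, `D` being a bound for the length of the segment. -/
theorem convex_approx_fixed {T : H → H} (hT : ∀ x z, ‖T x - T z‖ ≤ ‖x - z‖)
    {x w : H} {s δ D : ℝ} (hs0 : 0 ≤ s) (hs1 : s ≤ 1) (hD : ‖x - w‖ ≤ D)
    (hx : ‖T x - x‖ ≤ δ) (hw : ‖T w - w‖ ≤ δ) :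
    ‖T (x + s • (w - x)) - (x + s • (w - x))‖ ^ 2 ≤ D * δ + δ ^ 2 := by
  set z := x + s • (w - x) with hz
  have hδ0 : 0 ≤ δ := (norm_nonneg _).trans hx
  have hd0 := norm_nonneg (x - w)
  have h1 : ‖T z - x‖ ≤ s * ‖x - w‖ + δ := by
    have a1 : ‖z - x‖ = s * ‖x - w‖ := by
      have : z - x = s • (w - x) := by rw [hz]; abel
      rw [this, norm_smul, Real.norm_of_nonneg hs0, norm_sub_rev]
    have a2 : T z - x = (T z - T x) + (T x - x) := by abel
    rw [a2]
    linarith [norm_add_le (T z - T x) (T x - x), hT z x]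
  have h2 : ‖T z - w‖ ≤ (1 - s) * ‖x - w‖ + δ := by
    have a1 : ‖z - w‖ = (1 - s) * ‖x - w‖ := by
      have : z - w = (1 - s) • (x - w) := by rw [hz]; module
      rw [this, norm_smul, Real.norm_of_nonneg (by linarith)]
    have a2 : T z - w = (T z - T w) + (T w - w) := by abel
    rw [a2]
    linarith [norm_add_le (T z - T w) (T w - w), hT z w]
  have key : ‖T z - z‖ ^ 2 = (1 - s) * ‖T z - x‖ ^ 2 + s * ‖T z - w‖ ^ 2
      - s * (1 - s) * ‖x - w‖ ^ 2 := by
    have a1 : T z - z = (T z - x) - s • (w - x) := by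
      have := hz
      rw [this]; abel
    have a2 : T z - w = (T z - x) - (w - x) := by abel
    rw [a1, a2, norm_sub_sq_real _ (s • (w - x)), norm_sub_sq_real _ (w - x), inner_smul_right,
      norm_smul, Real.norm_of_nonneg hs0, norm_sub_rev x w]
    ring
  rw [key]
  have q1 : ‖T z - x‖ ^ 2 ≤ (s * ‖x - w‖ + δ) ^ 2 := by gcongr
  have q2 : ‖T z - w‖ ^ 2 ≤ ((1 - s) * ‖x - w‖ + δ) ^ 2 := by gcongr
  have r1 := mul_le_mul_of_nonneg_left q1 (by linarith : 0 ≤ 1 - s)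
  have r2 := mul_le_mul_of_nonneg_left q2 hs0
  have r3 : 4 * (s * (1 - s)) * (‖x - w‖ * δ) ≤ 1 * (‖x - w‖ * δ) := by
    gcongr
    nlinarith [sq_nonneg (2 * s - 1)]
  have r4 : ‖x - w‖ * δ ≤ D * δ := by gcongr
  nlinarith

/-- The points of the ball of radius `N` about `q` that are `1 / (K + 1)`-approximate fixed points
of both `jA` and `jB`. -/
def approxFix (jA jB : H → H) (q : H) (N K : ℕ) : Set H :=
  {z | ‖z - q‖ ≤ N ∧ ‖jA z - z‖ ≤ 1 / ((K:ℝ) + 1) ∧ ‖jB z - z‖ ≤ 1 / ((K:ℝ) + 1)}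

set_option linter.unusedSectionVars false in
theorem approxFix_anti {jA jB : H → H} {q : H} {N K L : ℕ} (h : K ≤ L) :
    approxFix jA jB q N L ⊆ approxFix jA jB q N K := by
  rintro z ⟨h1, h2, h3⟩
  have : 1 / ((L:ℝ) + 1) ≤ 1 / ((K:ℝ) + 1) := by gcongr
  exact ⟨h1, h2.trans this, h3.trans this⟩

theorem approxFix_segment {jA jB : H → H} (hjA : ∀ x z, ‖jA x - jA z‖ ≤ ‖x - z‖)
    (hjB : ∀ x z, ‖jB x - jB z‖ ≤ ‖x - z‖) {q : H} {N K : ℕ} (hN1 : 1 ≤ N) {x w : H} {s : ℝ}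
    (hs0 : 0 ≤ s) (hs1 : s ≤ 1) (hx : x ∈ approxFix jA jB q N (24 * N * (K + 1) ^ 2))
    (hw : w ∈ approxFix jA jB q N (24 * N * (K + 1) ^ 2)) :
    x + s • (w - x) ∈ approxFix jA jB q N K := by
  obtain ⟨x1, x2, x3⟩ := hx
  obtain ⟨w1, w2, w3⟩ := hw
  set δ : ℝ := 1 / (((24 * N * (K + 1) ^ 2 : ℕ) : ℝ) + 1) with hδ
  have hN : (1:ℝ) ≤ N := by exact_mod_cast hN1
  have hδ0 : 0 < δ := by positivity
  have hδ1 : δ ≤ 1 := by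
    rw [hδ, div_le_one (by positivity)]
    have : (0:ℝ) ≤ ((24 * N * (K + 1) ^ 2 : ℕ) : ℝ) := by positivity
    linarith
  have hD : ‖x - w‖ ≤ 2 * N := by
    have : x - w = (x - q) - (w - q) := by abel
    rw [this]; linarith [norm_sub_le (x - q) (w - q)]
  have hbound : 2 * N * δ + δ ^ 2 ≤ (1 / ((K:ℝ) + 1)) ^ 2 := by
    have h1 : 2 * N * δ + δ ^ 2 ≤ 3 * N * δ := by nlinarith
    have h2 : 3 * N * δ ≤ (1 / ((K:ℝ) + 1)) ^ 2 := by
      rw [hδ, one_div_pow, mul_one_div, div_le_div_iff₀ (by positivity) (by positivity)]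
      push_cast
      have : 0 ≤ (N:ℝ) * (K + 1) ^ 2 := by positivity
      nlinarith
    exact h1.trans h2
  refine ⟨?_, ?_, ?_⟩
  · have e : x + s • (w - x) - q = (1 - s) • (x - q) + s • (w - q) := by module
    rw [e]
    refine (norm_add_le _ _).trans ?_
    rw [norm_smul, norm_smul, Real.norm_of_nonneg hs0,
      Real.norm_of_nonneg (by linarith : (0:ℝ) ≤ 1 - s)]
    nlinarith
  · exact le_of_sq_le_sq ((convex_approx_fixed hjA hs0 hs1 hD x2 w2).trans hbound)
      (by positivity)
  · exact le_of_sq_le_sq ((convex_approx_fixed hjB hs0 hs1 hD x3 w3).trans hbound)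
      (by positivity)

/-- Finitary surrogate for the projection of `u` onto the common fixed points. -/
theorem approx_projection {jA jB : H → H} (hjA : ∀ x z, ‖jA x - jA z‖ ≤ ‖x - z‖)
    (hjB : ∀ x z, ‖jB x - jB z‖ ≤ ‖x - z‖) {q u : H} (hqA : jA q = q) (hqB : jB q = q)
    {N : ℕ} (hN1 : 1 ≤ N) (hu : 2 * ‖u - q‖ ≤ N) (k : ℕ) (h : ℕ → ℕ) :
    ∃ K ≤ zetaBound N k h, ∃ x ∈ approxFix jA jB q N (h K),
      ∀ w ∈ approxFix jA jB q N K, ⟪u - x, w - x⟫ ≤ 1 / ((k:ℝ) + 1) := by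
  set W : ℕ → ℕ := fun m => max (h (24 * N * (m + 1) ^ 2)) (24 * N * (m + 1) ^ 2) with hW
  set E := 4 * N ^ 4 * (k + 1) ^ 2 with hE
  have hN : (1:ℝ) ≤ N := by exact_mod_cast hN1
  set Δ : ℝ := 1 / (4 * N ^ 2 * ((k:ℝ) + 1) ^ 2) with hΔ
  have hEΔ : (E:ℝ) * Δ = N ^ 2 := by
    rw [hE, hΔ]; push_cast; field_simp
  have hWle : ∀ m, m ≤ W m := by
    intro m
    refine le_trans ?_ (le_max_right _ _)
    nlinarith [Nat.zero_le m, Nat.mul_le_mul_right ((m + 1) ^ 2) hN1]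
  -- some point is `Δ`-minimal relative to the next looser set
  have hmin : ∃ i < E, ∃ x ∈ approxFix jA jB q N (W^[i + 1] 0),
      ∀ z ∈ approxFix jA jB q N (W^[i] 0), ‖x - u‖ ^ 2 ≤ ‖z - u‖ ^ 2 + Δ := by
    by_contra hcon
    push Not at hcon
    have desc : ∀ l ≤ E, ∃ z ∈ approxFix jA jB q N (W^[E - l] 0),
        ‖z - u‖ ^ 2 ≤ ‖q - u‖ ^ 2 - l * Δ := by
      intro l
      induction l with
      | zero =>
        intro _
        refine ⟨q, ⟨?_, ?_, ?_⟩, by simp⟩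
        · simp
        · rw [hqA, sub_self, norm_zero]; positivity
        · rw [hqB, sub_self, norm_zero]; positivity
      | succ l ih =>
        intro hl
        obtain ⟨x, hx, hxn⟩ := ih (by omega)
        have e : E - l = (E - (l + 1)) + 1 := by omega
        rw [e] at hx
        obtain ⟨z, hz, hzn⟩ := hcon (E - (l + 1)) (by omega) x hx
        refine ⟨z, hz, ?_⟩
        push_cast
        linarith
    obtain ⟨z, _, hz⟩ := desc E le_rfl
    rw [hEΔ, norm_sub_rev q u] at hz
    nlinarith [sq_nonneg ‖z - u‖, norm_nonneg (u - q)]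
  obtain ⟨i, hi, x, hx, hxmin⟩ := hmin
  set K := 24 * N * (W^[i] 0 + 1) ^ 2 with hK
  have hsucc : W^[i + 1] 0 = max (h K) K := by
    rw [Function.iterate_succ_apply']
  rw [hsucc] at hx
  have hxh := approxFix_anti (le_max_left _ _) hx
  have hxK := approxFix_anti (le_max_right _ _) hx
  refine ⟨K, ?_, x, hxh, ?_⟩
  · have hmono : W^[i] 0 ≤ W^[E] 0 :=
      Function.monotone_iterate_of_id_le (fun m => hWle m) hi.le 0
    rw [hK, zetaBound]
    gcongr
  · intro w hw
    -- this `s` balances the two terms of `Δ / (2s) + 2N²s`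
    set s : ℝ := 1 / (4 * N ^ 2 * ((k:ℝ) + 1)) with hs
    have hs0 : 0 < s := by positivity
    have hs1 : s ≤ 1 := by
      rw [hs, div_le_one (by positivity)]
      have h1 : (1:ℝ) ≤ N ^ 2 := one_le_pow₀ hN
      have h2 : (0:ℝ) ≤ k := by positivity
      nlinarith
    have hz := hxmin _ (approxFix_segment hjA hjB hN1 hs0.le hs1 hxK hw)
    have e : x + s • (w - x) - u = (x - u) + s • (w - x) := by abel
    have e2 : ⟪x - u, w - x⟫ = -⟪u - x, w - x⟫ := by
      rw [← inner_neg_left, neg_sub]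
    rw [e, norm_add_sq_real, inner_smul_right, norm_smul, Real.norm_of_nonneg hs0.le, e2] at hz
    have hD : ‖w - x‖ ≤ 2 * N := by
      have : w - x = (w - q) - (x - q) := by abel
      rw [this]; linarith [norm_sub_le (w - q) (x - q), hw.1, hxK.1]
    have hD2 : ‖w - x‖ ^ 2 ≤ (2 * N) ^ 2 := by gcongr
    have hsD : s ^ 2 * ‖w - x‖ ^ 2 ≤ s ^ 2 * (2 * N) ^ 2 := by gcongr
    have hΔs : Δ = s ^ 2 * (2 * N) ^ 2 := by
      rw [hΔ, hs]; field_simp; ring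
    have hks : 1 / ((k:ℝ) + 1) = s * (4 * N ^ 2) := by
      rw [hs]; field_simp
    rw [hks]
    have : s * ⟪u - x, w - x⟫ ≤ s * (s * (4 * N ^ 2)) := by nlinarith
    exact le_of_mul_le_mul_left this hs0

/-- The approximate projection together with the metastability of the residuals of `y`. -/
theorem approx_projection_seq {jA jB : H → H} (hjA : ∀ x z, ‖jA x - jA z‖ ≤ ‖x - z‖)
    (hjB : ∀ x z, ‖jB x - jB z‖ ≤ ‖x - z‖) {q u : H} (hqA : jA q = q) (hqB : jB q = q)
    {N : ℕ} (hN1 : 1 ≤ N) (hu : 2 * ‖u - q‖ ≤ N) {y : ℕ → H} (hyN : ∀ n, ‖y n - q‖ ≤ N)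
    {η : ℕ → (ℕ → ℕ) → ℕ} (hηmono : MonoFunctional η)
    (hη : ∀ (k : ℕ) (f : ℕ → ℕ), Monotone f →
      ∃ n ≤ η k f, ∀ m ∈ Set.Icc n (f n),
        ‖jA (y m) - y m‖ ≤ 1/((k:ℝ)+1) ∧ ‖jB (y m) - y m‖ ≤ 1/((k:ℝ)+1))
    (k : ℕ) (h : ℕ → ℕ) (hh : Monotone h) :
    ∃ n ≤ OmegaBound N η k h, ∃ x ∈ approxFix jA jB q N (h n),
      ∀ m ∈ Set.Icc n (h n), ⟪u - x, y m - x⟫ ≤ 1 / ((k:ℝ) + 1) := by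
  obtain ⟨K, hK, x, hx, hxK⟩ := approx_projection hjA hjB hqA hqB hN1 hu k (fun m => h (η m h))
  obtain ⟨n, hn, hnm⟩ := hη K h hh
  exact ⟨n, hn.trans (hηmono _ _ _ _ hK fun a b hab => ⟨hh hab, hh hab⟩), x,
    approxFix_anti (hh hn) hx, fun m hm => hxK _ ⟨hyN m, hnm m hm⟩⟩

/-! ### Decay of the distances -/

/-- Unrolling a recursion that contracts by `1 - α` and then by `1 - lam`, with an additive error
`c` at each of the two half-steps. -/
theorem decay {α lam a b : ℕ → ℝ} (hα : ∀ n, α n ∈ Set.Ioo (0:ℝ) 1)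
    (hlam : ∀ n, lam n ∈ Set.Ioo (0:ℝ) 1) {c D : ℝ} (hc : 0 ≤ c) (hD : 0 ≤ D) {n p : ℕ}
    (h0 : a n ≤ D) (h1 : ∀ i, n ≤ i → i < p → b i ≤ (1 - α i) * a i + c)
    (h2 : ∀ i, n ≤ i → i < p → a (i + 1) ≤ (1 - lam i) * b i + c) (l : ℕ) (hl : n + l ≤ p) :
    a (n + l) ≤ D * Real.exp (∑ i ∈ Finset.range n, α i - ∑ i ∈ Finset.range (n + l), α i)
      + 2 * c * l := by
  induction l with
  | zero => simpa using h0
  | succ l ih =>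
    have ih := ih (by omega)
    have s1 := h1 (n + l) (by omega) (by omega)
    have s2 := h2 (n + l) (by omega) (by omega)
    rw [← add_assoc, Finset.sum_range_succ]
    have ee : ∑ i ∈ Finset.range n, α i - (∑ i ∈ Finset.range (n + l), α i + α (n + l))
        = (∑ i ∈ Finset.range n, α i - ∑ i ∈ Finset.range (n + l), α i) + -α (n + l) := by ring
    rw [ee, Real.exp_add]
    set X := Real.exp (∑ i ∈ Finset.range n, α i - ∑ i ∈ Finset.range (n + l), α i)
    have hX : 0 ≤ D * X := mul_nonneg hD (Real.exp_nonneg _)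
    have hexp := Real.add_one_le_exp (-α (n + l))
    obtain ⟨ha0, ha1⟩ := hα (n + l)
    obtain ⟨hl0, hl1⟩ := hlam (n + l)
    have hcl : 0 ≤ 2 * c * l := by positivity
    have t1 : (1 - α (n + l)) * a (n + l)
        ≤ (1 - α (n + l)) * (D * X + 2 * c * l) :=
      mul_le_mul_of_nonneg_left ih (by linarith)
    have t2 : (1 - α (n + l)) * (D * X) ≤ Real.exp (-α (n + l)) * (D * X) :=
      mul_le_mul_of_nonneg_right (by linarith) hX
    have t3 : b (n + l) ≤ Real.exp (-α (n + l)) * (D * X) + 2 * c * l + c := by nlinarith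
    have hY : 0 ≤ Real.exp (-α (n + l)) * (D * X) + 2 * c * l + c := by positivity
    have t4 := mul_le_mul_of_nonneg_left t3 (by linarith : 0 ≤ 1 - lam (n + l))
    push_cast
    nlinarith

end Aux

/-! ### Metastability -/

theorem stmt11 {H : Type*} [NormedAddCommGroup H] [InnerProductSpace ℝ H]
    (A B : H → Set H) (hA : MonotoneOp A) (hB : MonotoneOp B)
    (R : ℕ) (hR : 1 ≤ R) (jA jB : H → H)
    (hjA : IsResolvent A R jA) (hjB : IsResolvent B R jB)
    (u x₀ : H) (α lam β μ : ℕ → ℝ)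
    (hα : ∀ n, α n ∈ Set.Ioo (0:ℝ) 1) (hlam : ∀ n, lam n ∈ Set.Ioo (0:ℝ) 1)
    (hβpos : ∀ n, 0 < β n) (hμpos : ∀ n, 0 < μ n)
    (y : ℕ → H) (hy : MAR A B u x₀ α lam β μ y)
    (q : H) (hqA : (0:H) ∈ A q) (hqB : (0:H) ∈ B q)
    (N : ℕ) (hN1 : 1 ≤ N)
    (hN : (N:ℝ) ≥ max (max (2*‖u - q‖) ‖x₀ - q‖) ‖q‖)
    (η : ℕ → (ℕ → ℕ) → ℕ) (hηmono : MonoFunctional η)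
    (hη : ∀ (k : ℕ) (f : ℕ → ℕ), Monotone f →
      ∃ n ≤ η k f, ∀ m ∈ Set.Icc n (f n),
        ‖jA (y m) - y m‖ ≤ 1/((k:ℝ)+1) ∧ ‖jB (y m) - y m‖ ≤ 1/((k:ℝ)+1))
    (Ar : ℕ → ℕ) (hArmono : Monotone Ar)
    (hAr : ∀ k n : ℕ, (k : ℝ) ≤ ∑ i ∈ Finset.range (Ar k + n + 1), α i)
    (hβ : ∀ n, β n ≥ 1/(R:ℝ)) (hμ : ∀ n, μ n ≥ 1/(R:ℝ))
    (t : ℕ → ℕ) (htmono : Monotone t)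
    (ht : ∀ n, max (β n) (μ n) ≤ (t n : ℝ))
    (k : ℕ) (f : ℕ → ℕ) (hf : Monotone f) :
    ∃ n ≤ muTilde Ar N R t η k f, ∃ x : H, ‖x - q‖ ≤ (N:ℝ) ∧
      ∀ m ∈ Set.Icc n (f n),
        ‖y (2*m) - x‖ ≤ 1/((k:ℝ)+1) ∧
        ‖jA x - x‖ ≤ 1/((k:ℝ)+1) ∧ ‖jB x - x‖ ≤ 1/((k:ℝ)+1) := by
  have neA := resolvent_nonexpansive hA hR hjA
  have neB := resolvent_nonexpansive hB hR hjB
  have hN' : (1:ℝ) ≤ N := by exact_mod_cast hN1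
  have hR' : (1:ℝ) ≤ R := by exact_mod_cast hR
  have hu2 : 2 * ‖u - q‖ ≤ N := (le_max_left _ _).trans ((le_max_left _ _).trans hN)
  have hx0 : ‖x₀ - q‖ ≤ N := (le_max_right _ _).trans ((le_max_left _ _).trans hN)
  have hu : ‖u - q‖ ≤ N := by linarith [norm_nonneg (u - q)]
  obtain ⟨hy0, hyS⟩ := hy
  have hyE : ∀ n, ‖y (2 * n) - q‖ ≤ N ∧ ‖y (2 * n + 1) - q‖ ≤ N := by
    intro n
    induction n with
    | zero =>
      have h0 : ‖y (2 * 0) - q‖ ≤ N := by simpa [hy0] using hx0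
      exact ⟨h0, step_bounded hA hqA (hα 0) (hβpos 0) (hyS 0).1 hu h0⟩
    | succ n ih =>
      have h0 : ‖y (2 * (n + 1)) - q‖ ≤ N :=
        step_bounded hB hqB (hlam n) (hμpos n) (hyS n).2 hu ih.2
      exact ⟨h0, step_bounded hA hqA (hα _) (hβpos _) (hyS _).1 hu h0⟩
  have hyN : ∀ n, ‖y n - q‖ ≤ N := by
    intro n
    rcases Nat.even_or_odd' n with ⟨c, rfl | rfl⟩
    exacts [(hyE c).1, (hyE c).2]
  have htpos : ∀ n, 1 ≤ t n := by
    intro n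
    have : (0:ℝ) < t n := lt_of_lt_of_le (hβpos n) ((le_max_left _ _).trans (ht n))
    exact_mod_cast this
  have hσmono : Monotone (sigma1 Ar N ((k+1)^2 - 1)) := by
    intro a b hab
    unfold sigma1
    exact Nat.add_le_add_right (hArmono (Nat.add_le_add_right hab _)) 1
  rw [muTilde]
  set σ := sigma1 Ar N ((k+1)^2 - 1) with hσ
  set h : ℕ → ℕ := fun n => 2 * (64*N*R*(k+1)^2 * (f (σ n) + 1) * t (f (σ n)) - 1) + 2 with hh
  have hmono : Monotone h := by
    intro a b hab
    have h1 : f (σ a) ≤ f (σ b) := hf (hσmono hab)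
    have h2 : t (f (σ a)) ≤ t (f (σ b)) := htmono h1
    simp only [hh]
    gcongr
  obtain ⟨n, hn, x, ⟨hxq, hxA, hxB⟩, hin⟩ := approx_projection_seq neA neB
    (resolvent_zero hA hR hjA hqA) (resolvent_zero hB hR hjB hqB) hN1 hu2 hyN hηmono hη
    (16*(k+1)^2 - 1) h hmono
  refine ⟨σ n, hσmono hn, x, hxq, ?_⟩
  rintro m ⟨hm1, hm2⟩
  set p := f (σ n) with hp
  set G := 64*N*R*(k+1)^2 * (p + 1) * t p with hG
  have hhn : h n = 2 * (G - 1) + 2 := rfl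
  have hG1 : G ≤ h n + 1 := by omega
  have htp := htpos p
  have hGk : (64 * (k + 1)) * (p + 1) ≤ G := by
    calc (64 * (k + 1)) * (p + 1) = 64*1*1*(k+1)^1 * (p + 1) * 1 := by ring
      _ ≤ G := by rw [hG]; gcongr <;> omega
  have hGpos : 0 < G := lt_of_lt_of_le (by positivity) hGk
  set δ : ℝ := 1 / ((h n : ℝ) + 1) with hδ
  have hGR : (G:ℝ) ≤ (h n : ℝ) + 1 := by exact_mod_cast hG1
  have hδG : δ ≤ 1 / G := by
    rw [hδ]
    exact one_div_le_one_div_of_le (by exact_mod_cast hGpos) hGR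
  have hδ0 : 0 ≤ δ := by positivity
  have hδk : δ ≤ 1 / ((k:ℝ) + 1) := by
    refine hδG.trans (one_div_le_one_div_of_le (by positivity) ?_)
    have : k + 1 ≤ G := by nlinarith
    exact_mod_cast this
  refine ⟨?_, hxA.trans hδk, hxB.trans hδk⟩
  set ε : ℝ := 1 / (16 * ((k:ℝ) + 1) ^ 2) with hε
  have hε0 : 0 ≤ ε := by positivity
  have hkε : 1 / (((16*(k+1)^2 - 1 : ℕ) : ℝ) + 1) = ε := by
    have : 1 ≤ 16 * (k+1)^2 := by nlinarith
    rw [hε]; push_cast [Nat.cast_sub this]; ring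
  rw [hkε] at hin
  -- `σ` skips enough terms for the exponential factor to become small
  set L := ⌈Real.log (16*(N:ℝ)^2*((((k+1)^2 - 1 : ℕ):ℝ)+1))⌉₊ with hL
  have hσn : σ n = Ar (n + L) + 1 := rfl
  have hkk : ((((k+1)^2 - 1 : ℕ):ℝ)+1) = ((k:ℝ)+1)^2 := by
    have : 1 ≤ (k+1)^2 := Nat.one_le_pow _ _ (by omega)
    push_cast [Nat.cast_sub this]; ring
  have hsum : ((n + L : ℕ):ℝ) ≤ ∑ i ∈ Finset.range m, α i := by
    have := hAr (n + L) (m - (Ar (n + L) + 1))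
    rwa [show Ar (n + L) + (m - (Ar (n + L) + 1)) + 1 = m by omega] at this
  have hsumle : ∀ r, ∑ i ∈ Finset.range r, α i ≤ r := by
    intro r
    calc ∑ i ∈ Finset.range r, α i ≤ ∑ i ∈ Finset.range r, (1:ℝ) :=
          Finset.sum_le_sum fun i _ => (hα i).2.le
      _ = r := by simp
  have hnm : n ≤ m := by
    have : ((n + L : ℕ):ℝ) ≤ m := hsum.trans (hsumle m)
    have : n + L ≤ m := by exact_mod_cast this
    omega
  have hhp : 2 * p ≤ h n := by
    have : p + 1 ≤ G := by nlinarith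
    omega
  set c : ℝ := 8 * N * R * t p * δ with hc
  have hc0 : 0 ≤ c := by positivity
  have hiβ : ∀ i < p, β i ≤ t p := fun i hi =>
    (le_max_left _ _).trans ((ht i).trans (by exact_mod_cast htmono hi.le))
  have hiμ : ∀ i < p, μ i ≤ t p := fun i hi =>
    (le_max_right _ _).trans ((ht i).trans (by exact_mod_cast htmono hi.le))
  have hdist : ‖y (2 * n) - x‖ ≤ 2 * N := by
    have : y (2 * n) - x = (y (2 * n) - q) - (x - q) := by abel
    rw [this]; linarith [norm_sub_le (y (2 * n) - q) (x - q), hyN (2 * n)]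
  have hdec := decay (a := fun i => ‖y (2 * i) - x‖ ^ 2 - 2 * ε)
    (b := fun i => ‖y (2 * i + 1) - x‖ ^ 2 - 2 * ε) (D := 4 * N ^ 2) (n := n) (p := p)
    hα hlam hc0 (by positivity)
    (by nlinarith [norm_nonneg (y (2 * n) - x)])
    (fun i hi hip => half_step hA hR hjA (hα i) (hβ i) (hiβ i hip) (hyS i).1 hu hxq (hyN _)
      (hyN _) hxA (hin _ ⟨by omega, by omega⟩))
    (fun i hi hip => half_step hB hR hjB (hlam i) (hμ i) (hiμ i hip) (hyS i).2 hu hxq (hyN _)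
      (hyN _) hxB (hin _ ⟨by omega, by omega⟩))
    (m - n) (by omega)
  rw [show n + (m - n) = m by omega] at hdec
  have hexp : 4 * (N:ℝ) ^ 2 *
      Real.exp (∑ i ∈ Finset.range n, α i - ∑ i ∈ Finset.range m, α i)
      ≤ 1 / (4 * ((k:ℝ) + 1) ^ 2) := by
    have hlog : Real.log (16*(N:ℝ)^2*((k:ℝ)+1)^2) ≤ L := by
      rw [hL, hkk]; exact Nat.le_ceil _
    have h1 : ∑ i ∈ Finset.range n, α i - ∑ i ∈ Finset.range m, α i
        ≤ -Real.log (16*(N:ℝ)^2*((k:ℝ)+1)^2) := by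
      push_cast at hsum
      linarith [hsumle n]
    have h2 := Real.exp_le_exp.mpr h1
    rw [Real.exp_neg, Real.exp_log (by positivity)] at h2
    calc _ ≤ 4 * (N:ℝ) ^ 2 * (16*(N:ℝ)^2*((k:ℝ)+1)^2)⁻¹ := by gcongr
      _ = _ := by field_simp; norm_num
  have herr : 2 * c * ((m - n : ℕ):ℝ) ≤ 1 / (4 * ((k:ℝ) + 1) ^ 2) := by
    have h1 : ((m - n : ℕ):ℝ) ≤ (p:ℝ) + 1 := by
      have : m - n ≤ p + 1 := by omega
      exact_mod_cast this
    have htR : (0:ℝ) < t p := by exact_mod_cast htp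
    have h2 : c ≤ 8 * N * R * t p * (1 / G) := by rw [hc]; gcongr
    calc 2 * c * ((m - n : ℕ):ℝ) ≤ 2 * (8 * N * R * t p * (1 / G)) * ((p:ℝ) + 1) := by gcongr
      _ = 1 / (4 * ((k:ℝ) + 1) ^ 2) := by
        rw [hG]; push_cast; field_simp; norm_num
  have hfin : ‖y (2 * m) - x‖ ^ 2 ≤ (1 / ((k:ℝ) + 1)) ^ 2 := by
    have e1 : ε = 1 / 16 * (1 / ((k:ℝ) + 1)) ^ 2 := by rw [hε]; field_simp
    have e2 : 1 / (4 * ((k:ℝ) + 1) ^ 2) = 1 / 4 * (1 / ((k:ℝ) + 1)) ^ 2 := by field_simp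
    rw [e2] at hexp herr
    have : 0 ≤ (1 / ((k:ℝ) + 1)) ^ 2 := by positivity
    linarith
  exact le_of_sq_le_sq hfin (by positivity)
end

section
/- Let H be a real Hilbert space and A', B' : H → Set H monotone operators. Let (z_n) and auxiliary points (p_n), (q'_n) in H satisfy, with data u, z₀ ∈ H, (α̃_n), (λ̃_n) ⊂ (0,1) and (β̃_n), (μ̃_n) ⊂ (0,∞): for all n, (1/β̃_n)·(z_{2n} − p_n) ∈ A'(p_n) with z_{2n+1} = α̃_n u + (1−α̃_n) p_n, and (1/μ̃_n)·(z_{2n+1} − q'_n) ∈ B'(q'_n) with z_{2n+2} = λ̃_n u + (1−λ̃_n) q'_n (i.e. (z_n) is the Halpern-type iteration (HPPA₂*)). Let (y_n) be generated by the exact method of alternating resolvents (MAR*) for the operators A := B' and B := A' with parameters α_n := α̃_n, λ_n := λ̃_n, β_n := μ̃_n, μ_n := β̃_{n+1}, the same anchor u, and initial point y₀ := p₀ (i.e. y₀ = J^{A'}_{β̃₀}(z₀)). Then: (1) if α̃_n → 0, λ̃_n → 0 and z_n → x for some x ∈ H, then y_n → x; (2) if a, ℓ : ℕ → ℕ are rates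 of convergence for α̃_n → 0 and λ̃_n → 0 respectively, q ∈ H is a common zero of A' and B' (0 ∈ A'(q), 0 ∈ B'(q)) and N ∈ ℕ satisfies N ≥ max{‖u − q‖, ‖y₀ − q‖, ‖q‖}, then γ(k) := 2·max{a(2N(k+1)−1), ℓ(2N(k+1)−1)} + 1 is a rate of convergence for ‖z_{n+1} − y_n‖ → 0; (3) under the hypotheses of (2), if ρ is a rate of metastability for (z_n), then ρ̃(k,f) := max{ρ(2k+1, m ↦ f̃[γ(4k+3)](m)+1), γ(4k+3)} is a rate of metastability for (y_n). -/
/-!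
The two iterations are one sequence of resolvents, written at different stages. Since resolvents
of a monotone operator are single-valued (indeed nonexpansive, `resolvent_nonexpansive`), an
induction gives `y (2n) = p n` and `y (2n+1) = q' n`. Hence `z (n+1) = t n • u + (1 - t n) • y n`,
where `t` interleaves `α̃` and `λ̃` (`mar_eq`), so that `z (n+1) - y n = t n • (u - y n)`.

Part (1) follows by solving for `y n`. For part (2), nonexpansiveness keeps every `y n` within
distance `N` of the common zero `q`, so `‖z (n+1) - y n‖ ≤ 2 N t n`. Part (3) compares `y i, y j`
with `z (i+1), z (j+1)` by the triangle inequality, splitting the error as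
`1/(4(k+1)) + 1/(2(k+1)) + 1/(4(k+1))`.
-/

open scoped RealInnerProductSpace
open Filter Topology

/-- `γ(k) = 2·max{a(2N(k+1)−1), ℓ(2N(k+1)−1)} + 1`. -/
def gammaRate (a ℓ : ℕ → ℕ) (N k : ℕ) : ℕ :=
  2 * max (a (2*N*(k+1) - 1)) (ℓ (2*N*(k+1) - 1)) + 1

/-- Resolvents of a monotone operator are nonexpansive; here `p` and `p'` are the resolvents, with
parameter `c`, of `x` and `x'`. For `x = x'` this is single-valuedness. -/
lemma resolvent_nonexpansive_s14 {H : Type*} [NormedAddCommGroup H] [InnerProductSpace ℝ H]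
    {A : H → Set H} (hA : MonotoneOp A) {c : ℝ} (hc : 0 < c) {x x' p p' : H}
    (h : (1 / c) • (x - p) ∈ A p) (h' : (1 / c) • (x' - p') ∈ A p') :
    ‖p - p'‖ ≤ ‖x - x'‖ := by
  have h1 := hA p p' _ _ h h'
  rw [← smul_sub, real_inner_smul_right] at h1
  have h2 : 0 ≤ ⟪p - p', (x - p) - (x' - p')⟫ := nonneg_of_mul_nonneg_right h1 (by positivity)
  rw [show (x - p) - (x' - p') = (x - x') - (p - p') by abel, inner_sub_right,
    real_inner_self_eq_norm_sq] at h2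
  have h3 := real_inner_le_norm (p - p') (x - x')
  have h4 := norm_nonneg (x - x')
  by_contra! hlt
  nlinarith only [h2, h3, h4, hlt]

/-- The interleaving `s 0, r 0, s 1, r 1, …` of two real sequences. -/
noncomputable def interleave (s r : ℕ → ℝ) (n : ℕ) : ℝ :=
  if n % 2 = 0 then s (n / 2) else r (n / 2)

lemma interleave_even (s r : ℕ → ℝ) (n : ℕ) : interleave s r (2 * n) = s n := by
  simp [interleave]

lemma interleave_odd (s r : ℕ → ℝ) (n : ℕ) : interleave s r (2 * n + 1) = r n := by
  have h1 : (2 * n + 1) % 2 = 1 := by omega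
  have h2 : (2 * n + 1) / 2 = n := by omega
  simp [interleave, h1, h2]

lemma tendsto_interleave {s r : ℕ → ℝ} {l : Filter ℝ} (hs : Tendsto s atTop l)
    (hr : Tendsto r atTop l) : Tendsto (interleave s r) atTop l := by
  have h2 : Tendsto (fun n : ℕ => n / 2) atTop atTop :=
    Nat.tendsto_div_const_atTop (by norm_num)
  exact (hs.comp h2).if' (hr.comp h2)

/-- The identity linking the two iterations: `z` is, up to an index shift, the convex combination
of the anchor `u` with `y`. -/
lemma mar_eq {H : Type*} [NormedAddCommGroup H] [InnerProductSpace ℝ H]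
    {A' B' : H → Set H} (hA' : MonotoneOp A') (hB' : MonotoneOp B')
    {u : H} {αt lamt βt μt : ℕ → ℝ}
    (hβt : ∀ n, 0 < βt n) (hμt : ∀ n, 0 < μt n) {z p q' : ℕ → H}
    (hz : ∀ n : ℕ,
      (1 / βt n) • (z (2*n) - p n) ∈ A' (p n) ∧
      z (2*n+1) = αt n • u + (1 - αt n) • p n ∧
      (1 / μt n) • (z (2*n+1) - q' n) ∈ B' (q' n) ∧
      z (2*n+2) = lamt n • u + (1 - lamt n) • q' n)
    {y : ℕ → H}
    (hy : MAR B' A' u (p 0) αt lamt (fun n => μt n) (fun n => βt (n+1)) y) (n : ℕ) :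
    z (n + 1) = interleave αt lamt n • u + (1 - interleave αt lamt n) • y n := by
  obtain ⟨hy0, hy⟩ := hy
  have hodd : ∀ n, y (2 * n) = p n → y (2 * n + 1) = q' n := by
    intro n hn
    have h := (hy n).1
    rw [hn, ← (hz n).2.1] at h
    have := resolvent_nonexpansive_s14 hB' (hμt n) h (hz n).2.2.1
    rwa [sub_self, norm_zero, norm_le_zero_iff, sub_eq_zero] at this
  have heven : ∀ n, y (2 * n) = p n := by
    intro n
    induction n with
    | zero => exact hy0
    | succ n ih =>
      have h := (hy n).2
      rw [hodd n ih, ← (hz n).2.2.2] at h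
      have := resolvent_nonexpansive_s14 hA' (hβt (n + 1)) h (hz (n + 1)).1
      rwa [show 2 * (n + 1) = 2 * n + 2 by ring, sub_self, norm_zero, norm_le_zero_iff,
        sub_eq_zero] at this
  obtain ⟨m, rfl | rfl⟩ := Nat.even_or_odd' n
  · rw [interleave_even, heven]
    exact (hz m).2.1
  · rw [interleave_odd, hodd m (heven m)]
    exact (hz m).2.2.2

/-- The ball of radius `N` around a common zero is invariant under MAR*, provided it contains the
anchor and the initial point. -/
lemma mar_bounded {H : Type*} [NormedAddCommGroup H] [InnerProductSpace ℝ H]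
    {A B : H → Set H} (hA : MonotoneOp A) (hB : MonotoneOp B) {u x₀ q : H}
    {α lam β μ : ℕ → ℝ}
    (hα : ∀ n, α n ∈ Set.Ioo (0:ℝ) 1) (hlam : ∀ n, lam n ∈ Set.Ioo (0:ℝ) 1)
    (hβ : ∀ n, 0 < β n) (hμ : ∀ n, 0 < μ n) {y : ℕ → H}
    (hy : MAR A B u x₀ α lam β μ y) (hqA : (0:H) ∈ A q) (hqB : (0:H) ∈ B q)
    {N : ℝ} (hu : ‖u - q‖ ≤ N) (h0 : ‖y 0 - q‖ ≤ N) (n : ℕ) : ‖y n - q‖ ≤ N := by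
  have hconv : ∀ {t : ℝ} {v : H}, t ∈ Set.Ioo (0:ℝ) 1 → ‖v - q‖ ≤ N →
      ‖t • u + (1 - t) • v - q‖ ≤ N := by
    intro t v ht hv
    have hcl := (convex_closedBall q N) (mem_closedBall_iff_norm.2 hu)
      (mem_closedBall_iff_norm.2 hv) ht.1.le (sub_nonneg.2 ht.2.le) (by ring)
    exact mem_closedBall_iff_norm.1 hcl
  -- a zero of the operator is a fixed point of each of its resolvents
  have hodd : ∀ n, ‖y (2 * n) - q‖ ≤ N → ‖y (2 * n + 1) - q‖ ≤ N := fun n hn =>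
    (resolvent_nonexpansive_s14 hA (hβ n) (hy.2 n).1 (x' := q) (by simpa using hqA)).trans
      (hconv (hα n) hn)
  have heven : ∀ n, ‖y (2 * n) - q‖ ≤ N := by
    intro n
    induction n with
    | zero => exact h0
    | succ n ih =>
      exact (resolvent_nonexpansive_s14 hB (hμ n) (hy.2 n).2 (x' := q) (by simpa using hqB)).trans
        (hconv (hlam n) (hodd n ih))
  obtain ⟨m, rfl | rfl⟩ := Nat.even_or_odd' n
  · exact heven m
  · exact hodd m (heven m)

theorem stmt14 {H : Type*} [NormedAddCommGroup H] [InnerProductSpace ℝ H]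
    (A' B' : H → Set H) (hA' : MonotoneOp A') (hB' : MonotoneOp B')
    (u z₀ : H) (αt lamt βt μt : ℕ → ℝ)
    (hαt : ∀ n, αt n ∈ Set.Ioo (0:ℝ) 1) (hlamt : ∀ n, lamt n ∈ Set.Ioo (0:ℝ) 1)
    (hβt : ∀ n, 0 < βt n) (hμt : ∀ n, 0 < μt n)
    (z p q' : ℕ → H) (hz0 : z 0 = z₀)
    (hz : ∀ n : ℕ,
      (1 / βt n) • (z (2*n) - p n) ∈ A' (p n) ∧
      z (2*n+1) = αt n • u + (1 - αt n) • p n ∧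
      (1 / μt n) • (z (2*n+1) - q' n) ∈ B' (q' n) ∧
      z (2*n+2) = lamt n • u + (1 - lamt n) • q' n)
    (y : ℕ → H)
    (hy : MAR B' A' u (p 0) αt lamt (fun n => μt n) (fun n => βt (n+1)) y) :
    -- (1)
    (∀ x : H, Tendsto αt atTop (𝓝 0) → Tendsto lamt atTop (𝓝 0) →
      Tendsto z atTop (𝓝 x) → Tendsto y atTop (𝓝 x)) ∧
    -- (2) and (3)
    (∀ a ℓ : ℕ → ℕ,
      (∀ k : ℕ, ∀ n ≥ a k, |αt n| ≤ 1/((k:ℝ)+1)) →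
      (∀ k : ℕ, ∀ n ≥ ℓ k, |lamt n| ≤ 1/((k:ℝ)+1)) →
      ∀ q : H, (0:H) ∈ A' q → (0:H) ∈ B' q →
      ∀ N : ℕ, (N:ℝ) ≥ max (max ‖u - q‖ ‖y 0 - q‖) ‖q‖ →
        ((∀ k : ℕ, ∀ n ≥ gammaRate a ℓ N k, ‖z (n+1) - y n‖ ≤ 1/((k:ℝ)+1)) ∧
         (∀ ρ : ℕ → (ℕ → ℕ) → ℕ,
           (∀ (k : ℕ) (f : ℕ → ℕ), ∃ n ≤ ρ k f,
             ∀ i ∈ Set.Icc n (f n), ∀ j ∈ Set.Icc n (f n),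
               ‖z i - z j‖ ≤ 1/((k:ℝ)+1)) →
           ∀ (k : ℕ) (f : ℕ → ℕ),
             ∃ n ≤ max (ρ (2*k+1)
                   (fun m => f (max m (gammaRate a ℓ N (4*k+3))) + 1))
                 (gammaRate a ℓ N (4*k+3)),
               ∀ i ∈ Set.Icc n (f n), ∀ j ∈ Set.Icc n (f n),
                 ‖y i - y j‖ ≤ 1/((k:ℝ)+1)))) := by
  have key := mar_eq hA' hB' hβt hμt hz hy
  refine ⟨?_, ?_⟩
  · intro x hα0 hlam0 hzx
    have ht := tendsto_interleave hα0 hlam0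
    have ht1 : ∀ n, 1 - interleave αt lamt n ≠ 0 := by
      intro n
      obtain ⟨m, rfl | rfl⟩ := Nat.even_or_odd' n
      · rw [interleave_even]
        exact (sub_pos.2 (hαt m).2).ne'
      · rw [interleave_odd]
        exact (sub_pos.2 (hlamt m).2).ne'
    have hy_eq : y = fun n => (1 - interleave αt lamt n)⁻¹ •
        (z (n + 1) - interleave αt lamt n • u) := by
      funext n
      rw [key n, add_sub_cancel_left, inv_smul_smul₀ (ht1 n)]
    have hlim : Tendsto (fun n => (1 - interleave αt lamt n)⁻¹ •
        (z (n + 1) - interleave αt lamt n • u)) atTop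
        (𝓝 (((1:ℝ) - 0)⁻¹ • (x - (0:ℝ) • u))) :=
      ((tendsto_const_nhds.sub ht).inv₀ (by norm_num)).smul
        ((hzx.comp (tendsto_add_atTop_nat 1)).sub (ht.smul_const u))
    rw [hy_eq]
    simpa using hlim
  · intro a ℓ ha hℓ q hqA hqB N hN
    have hu : ‖u - q‖ ≤ N := ((le_max_left _ _).trans (le_max_left _ _)).trans hN
    have h0 : ‖y 0 - q‖ ≤ N := ((le_max_right _ _).trans (le_max_left _ _)).trans hN
    have hbd := mar_bounded hB' hA' hαt hlamt (fun n => hμt n) (fun n => hβt (n + 1)) hy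
      hqB hqA hu h0
    have hrate : ∀ k : ℕ, ∀ n ≥ gammaRate a ℓ N k, ‖z (n+1) - y n‖ ≤ 1/((k:ℝ)+1) := by
      intro k n hn
      have ht : |interleave αt lamt n| ≤ 1 / (((2 * N * (k + 1) - 1 : ℕ) : ℝ) + 1) := by
        unfold gammaRate at hn
        obtain ⟨m, rfl | rfl⟩ := Nat.even_or_odd' n
        · rw [interleave_even]
          exact ha _ _ (by omega)
        · rw [interleave_odd]
          exact hℓ _ _ (by omega)
      have huy : ‖u - y n‖ ≤ 2 * N := by
        calc ‖u - y n‖ = ‖(u - q) - (y n - q)‖ := by rw [sub_sub_sub_cancel_right]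
          _ ≤ ‖u - q‖ + ‖y n - q‖ := norm_sub_le _ _
          _ ≤ 2 * N := by linarith [hbd n]
      have hdiff : z (n + 1) - y n = interleave αt lamt n • (u - y n) := by
        rw [key n]
        module
      rw [hdiff, norm_smul, Real.norm_eq_abs]
      -- for `N = 0` the subtraction in `2 * N * (k + 1) - 1` truncates, but then `u = y n`
      rcases Nat.eq_zero_or_pos N with rfl | hNpos
      · have h00 : ‖u - y n‖ = 0 := le_antisymm (by simpa using huy) (norm_nonneg _)
        rw [h00, mul_zero]
        positivity
      · have hpos : 1 ≤ 2 * N * (k + 1) := Nat.succ_le_of_lt (by positivity)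
        rw [Nat.cast_sub hpos] at ht
        push_cast at ht
        rw [sub_add_cancel] at ht
        have hN' : (0:ℝ) < N := by exact_mod_cast hNpos
        calc |interleave αt lamt n| * ‖u - y n‖
            ≤ 1 / (2 * N * ((k:ℝ) + 1)) * (2 * N) := by gcongr
          _ = 1 / ((k:ℝ) + 1) := by field_simp
    refine ⟨hrate, ?_⟩
    intro ρ hρ k f
    obtain ⟨m, hm, hmeta⟩ := hρ (2 * k + 1)
      (fun m => f (max m (gammaRate a ℓ N (4 * k + 3))) + 1)
    refine ⟨max m (gammaRate a ℓ N (4 * k + 3)), max_le_max hm le_rfl, ?_⟩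
    intro i hi j hj
    have hi1 := hrate _ i ((le_max_right _ _).trans hi.1)
    have hj1 := hrate _ j ((le_max_right _ _).trans hj.1)
    have hij := hmeta (i + 1) ⟨((le_max_left _ _).trans hi.1).trans (Nat.le_succ _),
      Nat.succ_le_succ hi.2⟩ (j + 1) ⟨((le_max_left _ _).trans hj.1).trans (Nat.le_succ _),
      Nat.succ_le_succ hj.2⟩
    push_cast at hi1 hj1 hij
    have htri : ‖y i - y j‖ ≤
        ‖z (i + 1) - z (j + 1)‖ + ‖z (i + 1) - y i‖ + ‖z (j + 1) - y j‖ := by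
      calc ‖y i - y j‖
          = ‖(z (i + 1) - z (j + 1)) - (z (i + 1) - y i) + (z (j + 1) - y j)‖ := by
            congr 1
            abel
        _ ≤ _ := (norm_add_le _ _).trans (by gcongr; exact norm_sub_le _ _)
    have hsum : 1 / (2 * (k:ℝ) + 1 + 1) + 1 / (4 * (k:ℝ) + 3 + 1) + 1 / (4 * (k:ℝ) + 3 + 1)
        = 1 / ((k:ℝ) + 1) := by
      rw [show 2 * (k:ℝ) + 1 + 1 = 2 * (k + 1) by ring,
        show 4 * (k:ℝ) + 3 + 1 = 4 * (k + 1) by ring]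
      field_simp
      norm_num
    linarith
end

section
/- Let H be a real Hilbert space and A, B : H → Set H monotone operators. Fix u, x₀ ∈ H, (α_n), (λ_n) ⊂ (0,1), (β_n), (μ_n) ⊂ (0,∞) and error sequences (e_n), (e'_n) ⊂ H. Let (x_n) be generated by the method of alternating resolvents with errors, i.e. for all n: (1/β_n)·(α_n u + (1−α_n) x_{2n} + e_n − x_{2n+1}) ∈ A(x_{2n+1}) and (1/μ_n)·(λ_n u + (1−λ_n) x_{2n+1} + e'_n − x_{2n+2}) ∈ B(x_{2n+2}); and let (y_n) be generated by the exact method of alternating resolvents (MAR*) with the same data and y₀ = x₀. Assume A' : ℕ × ℕ → ℕ satisfies condition (Q') for (α_n), E and E' are Cauchy rates for Σ ‖e_n‖ < ∞ and Σ ‖e'_n‖ < ∞ respectively, and M ∈ ℕ satisfies M ≥ Σ_{i=0}^{E(1)} ‖e_i‖ + Σ_{i=0}^{E'(1)} ‖e'_i‖ + 1. Then ρ(k) := max{2ρ₂(2k+1) + 1, 2E(2k+1) + 3} is a rate of convergence for ‖x_n − y_n‖ → 0, where ρ₂(k) := A'(ñ, 4M(k+1)−1) + ñ + 1 with ñ :=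 D(4k+3) + 1 and D(k) := max{E(2k+1), E'(2k+1)}. -/
/-!
Resolvents of monotone operators are nonexpansive (`norm_sub_le_of_resolvent`), so the distances
`d n = ‖x n - y n‖` satisfy `d (2n+1) ≤ (1 - α n) d (2n) + ‖e n‖` and
`d (2n+2) ≤ d (2n+1) + ‖e' n‖`. Hence `a n = d (2n)` obeys the perturbed contraction inequality
`a (n+1) ≤ (1 - α n) a n + c n` with `c n = ‖e n‖ + ‖e' n‖`, which unrolls
(`le_prod_mul_add_sum`) to `a n ≤ (∏_{m ≤ i < n} (1 - α i)) a m + ∑_{m ≤ i < n} c i`.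

From `m = 0` and `a 0 = 0` one gets `a n ≤ M` for all `n`. Taking `m = ñ`, the error sum is at
most `1/(4(k+1))` by the Cauchy rates, and the first summand is at most `M / (4M(k+1))` as soon as
`n > A'(ñ, 4M(k+1) - 1)`; so `a n ≤ 1/(2(k+1))` for `n ≥ ρ₂ k`. An odd index `2j+1` costs one
further error term `‖e j‖`.
-/

open scoped RealInnerProductSpace

/-- `(x n)` is generated by the method of alternating resolvents with errors (MAR). -/
def MARerr {H : Type*} [NormedAddCommGroup H] [InnerProductSpace ℝ H]
    (A B : H → Set H) (u x₀ : H) (α lam β μ : ℕ → ℝ) (e e' x : ℕ → H) : Prop :=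
  x 0 = x₀ ∧ ∀ n : ℕ,
    (1 / β n) • (α n • u + (1 - α n) • x (2*n) + e n - x (2*n+1)) ∈ A (x (2*n+1)) ∧
    (1 / μ n) • (lam n • u + (1 - lam n) • x (2*n+1) + e' n - x (2*n+2)) ∈ B (x (2*n+2))

/-- `D(k) = max{E(2k+1), E'(2k+1)}`. -/
def Drate (E E' : ℕ → ℕ) (k : ℕ) : ℕ := max (E (2*k+1)) (E' (2*k+1))

/-- `ρ₂(k) = A'(ñ, 4M(k+1)−1) + ñ + 1` with `ñ = D(4k+3)+1`. -/
def rho2 (A' : ℕ → ℕ → ℕ) (E E' : ℕ → ℕ) (M k : ℕ) : ℕ :=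
  A' (Drate E E' (4*k+3) + 1) (4*M*(k+1) - 1) + (Drate E E' (4*k+3) + 1) + 1

/-- `ρ(k) = max{2ρ₂(2k+1)+1, 2E(2k+1)+3}`. -/
def rhoRate (A' : ℕ → ℕ → ℕ) (E E' : ℕ → ℕ) (M k : ℕ) : ℕ :=
  max (2 * rho2 A' E E' M (2*k+1) + 1) (2 * E (2*k+1) + 3)

/-- The resolvent of a monotone operator is nonexpansive; `p` and `q` are the resolvents of `v`
and `w`. -/
lemma norm_sub_le_of_resolvent {H : Type*} [NormedAddCommGroup H] [InnerProductSpace ℝ H]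
    {A : H → Set H} (hA : MonotoneOp A) {b : ℝ} (hb : 0 < b) {p q v w : H}
    (hp : (1 / b) • (v - p) ∈ A p) (hq : (1 / b) • (w - q) ∈ A q) :
    ‖p - q‖ ≤ ‖v - w‖ := by
  have h := hA _ _ _ _ hp hq
  rw [← smul_sub, inner_smul_right,
    show v - p - (w - q) = (v - w) - (p - q) by abel, inner_sub_right,
    real_inner_self_eq_norm_sq] at h
  have h1 : 0 ≤ ⟪p - q, v - w⟫ - ‖p - q‖ ^ 2 :=
    nonneg_of_mul_nonneg_right h (one_div_pos.mpr hb)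
  have h2 := real_inner_le_norm (p - q) (v - w)
  by_contra! hlt
  nlinarith [norm_nonneg (v - w), norm_nonneg (p - q)]

/-- The one-step estimate: averaging with the common anchor `u` and adding the error `ε` before
applying the resolvent contracts distances by `1 - t`, up to `‖ε‖`. -/
lemma norm_sub_le_of_step {H : Type*} [NormedAddCommGroup H] [InnerProductSpace ℝ H]
    {A : H → Set H} (hA : MonotoneOp A) {b : ℝ} (hb : 0 < b) {t : ℝ} (ht : t ≤ 1)
    {u p q v w ε : H}
    (hp : (1 / b) • (t • u + (1 - t) • v + ε - p) ∈ A p)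
    (hq : (1 / b) • (t • u + (1 - t) • w - q) ∈ A q) :
    ‖p - q‖ ≤ (1 - t) * ‖v - w‖ + ‖ε‖ := by
  have h := norm_sub_le_of_resolvent hA hb hp hq
  rw [show t • u + (1 - t) • v + ε - (t • u + (1 - t) • w) = (1 - t) • (v - w) + ε by
    rw [smul_sub]; abel] at h
  refine h.trans ((norm_add_le _ _).trans ?_)
  rw [norm_smul, Real.norm_of_nonneg (by linarith)]

lemma le_prod_mul_add_sum {s a c : ℕ → ℝ} (hs0 : ∀ n, 0 ≤ s n) (hs1 : ∀ n, s n ≤ 1)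
    (hc : ∀ n, 0 ≤ c n) (h : ∀ n, a (n + 1) ≤ s n * a n + c n) {m n : ℕ} (hmn : m ≤ n) :
    a n ≤ (∏ i ∈ Finset.Ico m n, s i) * a m + ∑ i ∈ Finset.Ico m n, c i := by
  induction n, hmn using Nat.le_induction with
  | base => simp
  | succ n hmn ih =>
    rw [Finset.prod_Ico_succ_top hmn, Finset.sum_Ico_succ_top hmn]
    have h1 := mul_le_mul_of_nonneg_left ih (hs0 n)
    have h2 : s n * ∑ i ∈ Finset.Ico m n, c i ≤ ∑ i ∈ Finset.Ico m n, c i :=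
      mul_le_of_le_one_left (Finset.sum_nonneg fun i _ => hc i) (hs1 n)
    have h3 := h n
    linarith

/-- A Cauchy rate bounds every finite block of the tail, wherever it begins. -/
lemma sum_Ico_le_of_cauchyRate {f : ℕ → ℝ} (hf : ∀ i, 0 ≤ f i) {E : ℕ → ℕ}
    (hE : ∀ k n : ℕ, ∑ i ∈ Finset.Ico (E k + 1) (E k + n + 1), f i ≤ 1 / ((k : ℝ) + 1))
    (k : ℕ) {m : ℕ} (hm : E k + 1 ≤ m) (n : ℕ) :
    ∑ i ∈ Finset.Ico m n, f i ≤ 1 / ((k : ℝ) + 1) :=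
  (Finset.sum_le_sum_of_subset_of_nonneg (Finset.Ico_subset_Ico hm (by omega))
    fun i _ _ => hf i).trans (hE k n)

lemma sum_range_le_of_cauchyRate {f : ℕ → ℝ} (hf : ∀ i, 0 ≤ f i) {E : ℕ → ℕ}
    (hE : ∀ k n : ℕ, ∑ i ∈ Finset.Ico (E k + 1) (E k + n + 1), f i ≤ 1 / ((k : ℝ) + 1))
    (k n : ℕ) :
    ∑ i ∈ Finset.range n, f i ≤ ∑ i ∈ Finset.range (E k + 1), f i + 1 / ((k : ℝ) + 1) := by
  calc ∑ i ∈ Finset.range n, f i ≤ ∑ i ∈ Finset.range (E k + n + 1), f i :=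
        Finset.sum_le_sum_of_subset_of_nonneg (Finset.range_subset_range.mpr (by omega))
          fun i _ _ => hf i
    _ = ∑ i ∈ Finset.range (E k + 1), f i
          + ∑ i ∈ Finset.Ico (E k + 1) (E k + n + 1), f i :=
        (Finset.sum_range_add_sum_Ico f (by omega)).symm
    _ ≤ _ := by gcongr; exact hE k n

theorem stmt19 {H : Type*} [NormedAddCommGroup H] [InnerProductSpace ℝ H]
    (A B : H → Set H) (hA : MonotoneOp A) (hB : MonotoneOp B)
    (u x₀ : H) (α lam β μ : ℕ → ℝ)
    (hα : ∀ n, α n ∈ Set.Ioo (0:ℝ) 1) (hlam : ∀ n, lam n ∈ Set.Ioo (0:ℝ) 1)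
    (hβ : ∀ n, 0 < β n) (hμ : ∀ n, 0 < μ n)
    (e e' : ℕ → H) (x : ℕ → H) (hx : MARerr A B u x₀ α lam β μ e e' x)
    (y : ℕ → H) (hy : MAR A B u x₀ α lam β μ y)
    (A' : ℕ → ℕ → ℕ)
    (hA'mono : ∀ m m' k k' : ℕ, m ≤ m' → k ≤ k' → A' m k ≤ A' m' k')
    (hA' : ∀ k m : ℕ, ∏ i ∈ Finset.Icc m (A' m k), (1 - α i) ≤ 1/((k:ℝ)+1))
    (E E' : ℕ → ℕ)
    (hE : ∀ k n : ℕ, ∑ i ∈ Finset.Ico (E k + 1) (E k + n + 1), ‖e i‖ ≤ 1/((k:ℝ)+1))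
    (hE' : ∀ k n : ℕ, ∑ i ∈ Finset.Ico (E' k + 1) (E' k + n + 1), ‖e' i‖ ≤ 1/((k:ℝ)+1))
    (M : ℕ)
    (hM : (M:ℝ) ≥ ∑ i ∈ Finset.range (E 1 + 1), ‖e i‖
        + ∑ i ∈ Finset.range (E' 1 + 1), ‖e' i‖ + 1) :
    ∀ k : ℕ, ∀ n ≥ rhoRate A' E E' M k, ‖x n - y n‖ ≤ 1/((k:ℝ)+1) := by
  have hodd : ∀ n, ‖x (2*n+1) - y (2*n+1)‖ ≤ (1 - α n) * ‖x (2*n) - y (2*n)‖ + ‖e n‖ :=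
    fun n => norm_sub_le_of_step hA (hβ n) (hα n).2.le (hx.2 n).1 (hy.2 n).1
  have heven : ∀ n,
      ‖x (2*n+2) - y (2*n+2)‖ ≤ (1 - lam n) * ‖x (2*n+1) - y (2*n+1)‖ + ‖e' n‖ :=
    fun n => norm_sub_le_of_step hB (hμ n) (hlam n).2.le (hx.2 n).2 (hy.2 n).2
  let a : ℕ → ℝ := fun n => ‖x (2*n) - y (2*n)‖
  let c : ℕ → ℝ := fun n => ‖e n‖ + ‖e' n‖
  have ha_nonneg : ∀ n, 0 ≤ a n := fun n => norm_nonneg _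
  have hs0 : ∀ n, 0 ≤ 1 - α n := fun n => sub_nonneg.mpr (hα n).2.le
  have hs1 : ∀ n, 1 - α n ≤ 1 := fun n => by linarith [(hα n).1]
  have hrec : ∀ n, a (n + 1) ≤ (1 - α n) * a n + c n := fun n => by
    have h1 := hodd n
    have h2 := heven n
    have h3 := mul_nonneg (hlam n).1.le (norm_nonneg (x (2*n+1) - y (2*n+1)))
    change ‖x (2*n+2) - y (2*n+2)‖
      ≤ (1 - α n) * ‖x (2*n) - y (2*n)‖ + (‖e n‖ + ‖e' n‖)
    linarith
  have hunroll : ∀ {m n : ℕ}, m ≤ n →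
      a n ≤ (∏ i ∈ Finset.Ico m n, (1 - α i)) * a m + ∑ i ∈ Finset.Ico m n, c i :=
    fun hmn => le_prod_mul_add_sum hs0 hs1
      (fun n => add_nonneg (norm_nonneg _) (norm_nonneg _)) hrec hmn
  have haM : ∀ n, a n ≤ M := fun n => by
    have h0 : a 0 = 0 := by simp [a, hx.1, hy.1]
    have h1 := hunroll (Nat.zero_le n)
    rw [h0, mul_zero, zero_add, Nat.Ico_zero_eq_range, Finset.sum_add_distrib] at h1
    have h2 := sum_range_le_of_cauchyRate (fun i => norm_nonneg (e i)) hE 1 n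
    have h3 := sum_range_le_of_cauchyRate (fun i => norm_nonneg (e' i)) hE' 1 n
    norm_num at h2 h3
    linarith
  have hM1 : (1 : ℝ) ≤ M := by
    have h1 := Finset.sum_nonneg (s := Finset.range (E 1 + 1)) fun i _ => norm_nonneg (e i)
    have h2 := Finset.sum_nonneg (s := Finset.range (E' 1 + 1)) fun i _ => norm_nonneg (e' i)
    linarith
  have hrho2 : ∀ k n : ℕ, rho2 A' E E' M k ≤ n → a n ≤ 1 / (2 * ((k : ℝ) + 1)) := by
    intro k n hn
    unfold rho2 at hn
    set m := Drate E E' (4*k+3) + 1 with hm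
    set K := 4*M*(k+1) - 1 with hK
    have hk : (0 : ℝ) < (k : ℝ) + 1 := by positivity
    have hKcast : (K : ℝ) + 1 = 4 * M * (k + 1) := by
      have hMnat : 1 ≤ M := by exact_mod_cast hM1
      -- positivity of `M` is what keeps the natural subtraction in `K` from truncating
      have h1 : K + 1 = 4*M*(k+1) := by
        rw [hK]; exact Nat.sub_add_cancel (Nat.mul_pos (by omega) (by omega))
      exact_mod_cast h1
    have hprod : (∏ i ∈ Finset.Ico m n, (1 - α i)) ≤ 1 / ((K : ℝ) + 1) := by
      refine le_trans ?_ (hA' K m)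
      refine Finset.prod_le_prod_of_subset_of_le_one ?_ (fun i _ => hs0 i) (fun i _ _ => hs1 i)
      intro i hi
      simp only [Finset.mem_Icc, Finset.mem_Ico] at hi ⊢
      omega
    have hfirst : (∏ i ∈ Finset.Ico m n, (1 - α i)) * a m ≤ 1 / (4 * ((k : ℝ) + 1)) := by
      calc (∏ i ∈ Finset.Ico m n, (1 - α i)) * a m ≤ 1 / ((K : ℝ) + 1) * M :=
            mul_le_mul hprod (haM m) (ha_nonneg m) (by positivity)
        _ = 1 / (4 * ((k : ℝ) + 1)) := by
            rw [hKcast]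
            field_simp
    have h1 := sum_Ico_le_of_cauchyRate (fun i => norm_nonneg (e i)) hE (2*(4*k+3)+1)
      (m := m) (Nat.succ_le_succ (le_max_left _ _)) n
    have h2 := sum_Ico_le_of_cauchyRate (fun i => norm_nonneg (e' i)) hE' (2*(4*k+3)+1)
      (m := m) (Nat.succ_le_succ (le_max_right _ _)) n
    have h3 := hunroll (m := m) (n := n) (by omega)
    rw [Finset.sum_add_distrib] at h3
    have h4 : 1 / (((2*(4*k+3)+1 : ℕ) : ℝ) + 1) = 1 / (8 * ((k : ℝ) + 1)) := by
      push_cast; ring_nf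
    have h5 : 1 / (4 * ((k : ℝ) + 1)) + (1 / (8 * ((k : ℝ) + 1)) + 1 / (8 * ((k : ℝ) + 1)))
        = 1 / (2 * ((k : ℝ) + 1)) := by
      field_simp; norm_num
    rw [h4] at h1 h2
    linarith
  intro k n hn
  have hn1 : 2 * rho2 A' E E' M (2*k+1) + 1 ≤ n := (le_max_left _ _).trans hn
  have hn2 : 2 * E (2*k+1) + 3 ≤ n := (le_max_right _ _).trans hn
  have hk : (0 : ℝ) < (k : ℝ) + 1 := by positivity
  have hcast : (((2*k+1 : ℕ) : ℝ) + 1) = 2 * ((k : ℝ) + 1) := by push_cast; ring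
  obtain ⟨j, rfl | rfl⟩ := Nat.even_or_odd' n
  · have h1 := hrho2 (2*k+1) j (by omega)
    refine h1.trans (one_div_le_one_div_of_le hk ?_)
    rw [hcast]
    linarith
  · have h1 := hrho2 (2*k+1) j (by omega)
    have h2 : ‖e j‖ ≤ 1 / (((2*k+1 : ℕ) : ℝ) + 1) := by
      simpa using sum_Ico_le_of_cauchyRate (fun i => norm_nonneg (e i)) hE (2*k+1)
        (m := j) (by omega) (j + 1)
    have h3 := hodd j
    have h4 := mul_le_of_le_one_left (ha_nonneg j) (hs1 j)
    have h5 : 1 / (2 * (2 * ((k : ℝ) + 1))) + 1 / (2 * ((k : ℝ) + 1)) ≤ 1 / ((k : ℝ) + 1) := by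
      rw [← sub_nonneg]
      have : 1 / ((k : ℝ) + 1) - (1 / (2 * (2 * ((k : ℝ) + 1))) + 1 / (2 * ((k : ℝ) + 1)))
          = 1 / (4 * ((k : ℝ) + 1)) := by field_simp; norm_num
      rw [this]; positivity
    rw [hcast] at h1 h2
    change (1 - α j) * ‖x (2*j) - y (2*j)‖ ≤ a j at h4
    linarith
end
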